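/- The family of liftings (λ⁼ᵖ)_{p ∈ [0,1]} for the finite distribution functor D separates by singletons: for every type X and all d, d' ∈ D X with d ≠ d', there exist x ∈ X and p ∈ [0,1] such that d ∈ λ⁼ᵖ X {x} and d' ∉ λ⁼ᵖ X {x}. -/

import Mathlib

open CategoryTheory
open scoped NNReal Classical

universe u

/-- The finite distribution functor `D : Type u ⥤ Type u`. -/
noncomputable def DistFunctor : Type u ⥤ Type u where
  obj X := { d : X →₀ ℝ≥0 // ∑ x ∈ d.support, d x = 1 }
  map f := ↾fun d => ⟨Finsupp.mapDomain f d.1, by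
    have h : (Finsupp.mapDomain f d.1).sum (fun _ v => v) = d.1.sum (fun _ v => v) :=
      Finsupp.sum_mapDomain_index (fun _ => rfl) (fun _ _ _ => rfl)
    simpa [Finsupp.sum] using h.trans (by simpa [Finsupp.sum] using d.2)⟩
  map_id X := by
    refine ConcreteCategory.hom_ext _ _ fun d => ?_
    exact Subtype.ext (by
      change Finsupp.mapDomain id d.1 = d.1
      exact Finsupp.mapDomain_id)
  map_comp f g := by
    refine ConcreteCategory.hom_ext _ _ fun d => ?_
    exact Subtype.ext (by
      change Finsupp.mapDomain (g ∘ f) d.1 = Finsupp.mapDomain g (Finsupp.mapDomain f d.1)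
      exact Finsupp.mapDomain_comp)

/-- `λ⁼ᵖ`: the set of distributions assigning total probability exactly `p` to `U`. -/
noncomputable def probLifting (p : ℝ≥0) (X : Type u) (U : Set X) :
    Set (DistFunctor.obj X) :=
  { d | ∑ x ∈ d.1.support.filter (· ∈ U), d.1 x = p }

theorem sum_filter_singleton_aux {X : Type u} (d : X →₀ ℝ≥0) (x : X) :
    ∑ y ∈ d.support.filter (· ∈ ({x} : Set X)), d y = d x := by
  rw [Finset.sum_filter]
  simp only [Set.mem_singleton_iff]
  rw [Finset.sum_ite_eq' d.support x]
  split_ifs with hx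
  · rfl
  · exact (Finsupp.notMem_support_iff.mp hx).symm

theorem mem_probLifting_singleton_aux {X : Type u} (p : ℝ≥0) (d : DistFunctor.obj X) (x : X) :
    d ∈ probLifting p X {x} ↔ d.1 x = p := by
  have h := sum_filter_singleton_aux d.1 x
  constructor
  · intro hd
    exact h.symm.trans hd
  · intro hd
    exact h.trans hd

/-- The family `(λ⁼ᵖ)_{p ∈ [0,1]}` separates by singletons. -/
theorem probLifting_separatesBySingletons (X : Type u)
    (d d' : DistFunctor.obj X) (h : d ≠ d') :
    ∃ (x : X) (p : ℝ≥0), p ∈ Set.Icc (0 : ℝ≥0) 1 ∧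
      d ∈ probLifting p X {x} ∧ d' ∉ probLifting p X {x} := by
  have h1 : d.1 ≠ d'.1 := fun e => h (Subtype.ext e)
  obtain ⟨x, hx⟩ := Finsupp.ne_iff.mp h1
  refine ⟨x, d.1 x, ⟨zero_le, ?_⟩, (mem_probLifting_singleton_aux _ d x).2 rfl,
    fun hd => hx ((mem_probLifting_singleton_aux _ d' x).1 hd).symm⟩
  by_cases hs : x ∈ d.1.support
  · calc d.1 x ≤ ∑ y ∈ d.1.support, d.1 y :=
          Finset.single_le_sum (f := fun y => d.1 y) (fun _ _ => zero_le) hs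
      _ = 1 := d.2
  · rw [Finsupp.notMem_support_iff.mp hs]
    exact zero_le
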